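/- arXiv:2007.09132 — 2 statements merged into one kernel-verified Lean document; each statement's English description precedes it below -/
import Mathlib

section
/- Let f : J → ℝ be differentiable on J with (^{ABC}D^α f) continuous on J. If f attains its minimum over J at a point τ₀ ∈ J, then (^{ABC}D^α f)(τ₀) ≤ 0. -/
/-- One-parameter Mittag-Leffler function `E_α(z) = ∑ zⁿ / Γ(nα+1)`. -/
noncomputable def mlE (α z : ℝ) : ℝ := ∑' n : ℕ, z ^ n / Real.Gamma (n * α + 1)

/-- Atangana–Baleanu–Caputo fractional derivative of order `α` (base point 0),
with normalization constant `B = B(α)`. -/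
noncomputable def abcD (α B : ℝ) (m : ℝ → ℝ) (τ : ℝ) : ℝ :=
  B / (1 - α) * ∫ σ in (0:ℝ)..τ, mlE α (-(α / (1 - α)) * (τ - σ) ^ α) * deriv m σ

/-!
On `[0, τ₀]` the kernel `k σ = E_α (-c (τ₀ - σ)^α)`, `c = α / (1 - α)`, is nonnegative and
increasing. Integrating `k · (f - f τ₀)'` by parts, the boundary term at `τ₀` vanishes, the one at
`0` is `-k 0 * (f 0 - f τ₀) ≤ 0`, and the remaining integrand `k' · (f - f τ₀)` is nonnegative.

That `E_α` is nonnegative and increasing on `(-∞, 0]` is seen on a discrete approximation. By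
Euler's product for `Γ`, the coefficient of `X ^ n` in `(1 - X) ^ (-(1 + y))` is asymptotic to
`n ^ y / Γ (y + 1)`, so with `h = x / n ^ α` the coefficient of `X ^ n` in
`∑ₖ (-h) ^ k (1 - X) ^ (-(1 + k α)) = (1 - X) ^ (α - 1) / (h + (1 - X) ^ α)`
tends to `E_α (-x)`. For `0 ≤ α ≤ 1` all coefficients of `(1 - X) ^ α` after the first are
nonpositive, so both `(1 - X) ^ (α - 1)` and `1 / (h + (1 - X) ^ α)` have nonnegative coefficients,
and the coefficients of their product decrease in `h` by the resolvent identity.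
-/

open Filter Set Topology

section CoeffNonneg

open PowerSeries

theorem coeff_mul_nonneg {R : Type*} [Semiring R] [PartialOrder R] [IsOrderedRing R]
    {A B : PowerSeries R} (hA : ∀ n, 0 ≤ coeff n A) (hB : ∀ n, 0 ≤ coeff n B) (n : ℕ) :
    0 ≤ coeff n (A * B) := by
  rw [coeff_mul]
  exact Finset.sum_nonneg fun p _ ↦ mul_nonneg (hA _) (hB _)

theorem coeff_inv_nonneg {K : Type*} [Field K] [LinearOrder K] [IsStrictOrderedRing K]
    {D : PowerSeries K} (hD₀ : 0 ≤ constantCoeff D) (hD : ∀ n ≠ 0, coeff n D ≤ 0) (n : ℕ) :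
    0 ≤ coeff n D⁻¹ := by
  induction n using Nat.strong_induction_on with
  | _ n ih =>
    rw [coeff_inv]
    split_ifs with hn
    · exact inv_nonneg.2 hD₀
    · refine mul_nonneg_of_nonpos_of_nonpos (neg_nonpos.2 (inv_nonneg.2 hD₀))
        (Finset.sum_nonpos fun p hp ↦ ?_)
      split_ifs with hlt
      · have hp₁ : p.1 ≠ 0 := by
          have := Finset.HasAntidiagonal.mem_antidiagonal.1 hp
          omega
        exact mul_nonpos_of_nonpos_of_nonneg (hD _ hp₁) (ih _ hlt)
      · exact le_rfl

end CoeffNonneg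

section InvOneSubRpow

open PowerSeries

/-- The binomial series `(1 - X) ^ (-s)`, extending `PowerSeries.invOneSubPow` to arbitrary
exponents. -/
noncomputable def invOneSubRpow {K : Type*} [Field K] [CharZero K] (s : K) : PowerSeries K :=
  rescale (-1) (binomialSeries K (-s))

/-- The generating function `(1 - X) ^ (α - 1) / (h + (1 - X) ^ α)` of the discrete Mittag-Leffler
function `n ↦ ∑ₖ (-h) ^ k * C(n + k α, n)`. -/
noncomputable def discreteMLSeries {K : Type*} [Field K] [CharZero K] (α h : K) : PowerSeries K :=
  invOneSubRpow (1 - α) * (C h + invOneSubRpow (-α))⁻¹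

section Field

variable {K : Type*} [Field K] [CharZero K]

theorem invOneSubRpow_zero : invOneSubRpow (0 : K) = 1 := by
  rw [invOneSubRpow, neg_zero, binomialSeries_zero, map_one]

theorem invOneSubRpow_add (s t : K) :
    invOneSubRpow (s + t) = invOneSubRpow s * invOneSubRpow t := by
  rw [invOneSubRpow, neg_add, binomialSeries_add, map_mul, invOneSubRpow, invOneSubRpow]

theorem coeff_invOneSubRpow (s : K) (n : ℕ) :
    coeff n (invOneSubRpow s) = (∏ j ∈ Finset.range n, (s + j)) / n.factorial := by
  have hchoose : coeff n (invOneSubRpow s) = Ring.multichoose s n := by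
    rw [invOneSubRpow, coeff_rescale, binomialSeries_coeff, Ring.choose_neg', smul_eq_mul, mul_one,
      Units.smul_def, Int.coe_negOnePow_natCast, zsmul_eq_mul]
    push_cast
    rw [← mul_assoc, ← mul_pow, neg_one_mul, neg_neg, one_pow, one_mul]
  have heval (m : ℕ) : (ascPochhammer K m).eval s = ∏ j ∈ Finset.range m, (s + j) := by
    induction m with
    | zero => simp
    | succ m ih => rw [ascPochhammer_succ_eval, ih, Finset.prod_range_succ]
  rw [hchoose, ← heval, eq_div_iff (Nat.cast_ne_zero.2 n.factorial_ne_zero), mul_comm,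
    ← nsmul_eq_mul, Ring.factorial_nsmul_multichoose_eq_ascPochhammer,
    Polynomial.ascPochhammer_smeval_eq_eval]

theorem coeff_succ_invOneSubRpow (s : K) (n : ℕ) :
    coeff (n + 1) (invOneSubRpow s) = coeff n (invOneSubRpow s) * ((s + n) / (n + 1)) := by
  rw [coeff_invOneSubRpow, coeff_invOneSubRpow, Finset.prod_range_succ, Nat.factorial_succ]
  push_cast
  field_simp

theorem constantCoeff_C_add_invOneSubRpow (h s : K) :
    constantCoeff (C h + invOneSubRpow s) = h + 1 := by
  rw [map_add, constantCoeff_C, ← coeff_zero_eq_constantCoeff_apply, coeff_invOneSubRpow,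
    Finset.prod_range_zero, Nat.factorial_zero, Nat.cast_one, div_one]

end Field

section OrderedField

variable {K : Type*} [Field K] [LinearOrder K] [IsStrictOrderedRing K]

theorem coeff_invOneSubRpow_nonneg {s : K} (hs : 0 ≤ s) (n : ℕ) :
    0 ≤ coeff n (invOneSubRpow s) := by
  rw [coeff_invOneSubRpow]
  exact div_nonneg (Finset.prod_nonneg fun j _ ↦ by positivity) n.factorial.cast_nonneg

theorem coeff_invOneSubRpow_nonpos {s : K} (hs₁ : -1 ≤ s) (hs₀ : s ≤ 0) {n : ℕ} (hn : n ≠ 0) :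
    coeff n (invOneSubRpow s) ≤ 0 := by
  obtain ⟨m, rfl⟩ := Nat.exists_eq_succ_of_ne_zero hn
  rw [coeff_invOneSubRpow, Finset.prod_range_succ']
  refine div_nonpos_of_nonpos_of_nonneg (mul_nonpos_of_nonneg_of_nonpos
    (Finset.prod_nonneg fun j _ ↦ ?_) (by simpa using hs₀)) (Nat.cast_nonneg _)
  push_cast
  linarith [(j.cast_nonneg : (0 : K) ≤ j)]

theorem coeff_inv_C_add_invOneSubRpow_nonneg {α h : K} (hα₀ : 0 ≤ α) (hα₁ : α ≤ 1) (hh : 0 ≤ h)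
    (n : ℕ) : 0 ≤ coeff n (C h + invOneSubRpow (-α))⁻¹ := by
  refine coeff_inv_nonneg ?_ (fun m hm ↦ ?_) n
  · rw [constantCoeff_C_add_invOneSubRpow]
    positivity
  · rw [map_add, coeff_C, if_neg hm, zero_add]
    exact coeff_invOneSubRpow_nonpos (neg_le_neg hα₁) (neg_nonpos.2 hα₀) hm

theorem coeff_discreteMLSeries_nonneg {α h : K} (hα₀ : 0 ≤ α) (hα₁ : α ≤ 1) (hh : 0 ≤ h) (n : ℕ) :
    0 ≤ coeff n (discreteMLSeries α h) :=
  coeff_mul_nonneg (coeff_invOneSubRpow_nonneg (sub_nonneg.2 hα₁))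
    (coeff_inv_C_add_invOneSubRpow_nonneg hα₀ hα₁ hh) n

theorem discreteMLSeries_sub {α h h' : K} (hh : h + 1 ≠ 0) (hh' : h' + 1 ≠ 0) :
    discreteMLSeries α h - discreteMLSeries α h' =
      C (h' - h) * (discreteMLSeries α h * (C h' + invOneSubRpow (-α))⁻¹) := by
  have hinv : (C h + invOneSubRpow (-α)) * (C h + invOneSubRpow (-α))⁻¹ = 1 :=
    PowerSeries.mul_inv_cancel _ (by rwa [constantCoeff_C_add_invOneSubRpow])
  have hinv' : (C h' + invOneSubRpow (-α)) * (C h' + invOneSubRpow (-α))⁻¹ = 1 :=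
    PowerSeries.mul_inv_cancel _ (by rwa [constantCoeff_C_add_invOneSubRpow])
  rw [discreteMLSeries, discreteMLSeries, map_sub]
  linear_combination invOneSubRpow (1 - α) * (C h' + invOneSubRpow (-α))⁻¹ * hinv
    - invOneSubRpow (1 - α) * (C h + invOneSubRpow (-α))⁻¹ * hinv'

theorem antitoneOn_coeff_discreteMLSeries {α : K} (hα₀ : 0 ≤ α) (hα₁ : α ≤ 1) (n : ℕ) :
    AntitoneOn (fun h ↦ coeff n (discreteMLSeries α h)) (Ici 0) := by
  intro h (hh : 0 ≤ h) h' (hh' : 0 ≤ h') hle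
  rw [← sub_nonneg, ← map_sub, discreteMLSeries_sub (by positivity) (by positivity), coeff_C_mul]
  exact mul_nonneg (sub_nonneg.2 hle) (coeff_mul_nonneg (coeff_discreteMLSeries_nonneg hα₀ hα₁ hh)
    (coeff_inv_C_add_invOneSubRpow_nonneg hα₀ hα₁ hh') n)

end OrderedField

theorem isBigO_coeff_invOneSubRpow_one_add_natCast_mul (α : ℝ) (n : ℕ) :
    (fun k : ℕ ↦ coeff n (invOneSubRpow (1 + k * α))) =O[atTop] fun k : ℕ ↦ ((k ^ n : ℕ) : ℝ) := by
  have hfactor (j : ℕ) : (fun k : ℕ ↦ 1 + k * α + j) =O[atTop] fun k : ℕ ↦ (k : ℝ) := by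
    have hconst (c : ℝ) : (fun _ : ℕ ↦ c) =O[atTop] fun k : ℕ ↦ (k : ℝ) :=
      (Asymptotics.isLittleO_const_id_atTop c).isBigO.comp_tendsto tendsto_natCast_atTop_atTop
    have hlinear : (fun k : ℕ ↦ k * α) =O[atTop] fun k : ℕ ↦ (k : ℝ) := by
      simpa only [mul_comm α] using (Asymptotics.isBigO_refl _ _).const_mul_left α
    exact ((hconst 1).add hlinear).add (hconst j)
  have hprod := Asymptotics.IsBigO.finsetProd (s := Finset.range n) fun j _ ↦ hfactor j
  simpa only [coeff_invOneSubRpow, div_eq_inv_mul, Finset.prod_const, Finset.card_range,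
    Nat.cast_pow] using hprod.const_mul_left ((n.factorial : ℝ)⁻¹)

theorem summable_pow_mul_coeff_invOneSubRpow (α : ℝ) {h : ℝ} (hh : |h| < 1) (n : ℕ) :
    Summable fun k : ℕ ↦ h ^ k * coeff n (invOneSubRpow (1 + k * α)) := by
  simpa only [mul_comm] using (summable_norm_mul_geometric_of_norm_lt_one' hh
    (isBigO_coeff_invOneSubRpow_one_add_natCast_mul α n)).of_norm

open PowerSeries.WithPiTopology in
theorem hasSum_coeff_discreteMLSeries (α : ℝ) {h : ℝ} (hh : |h| < 1) (n : ℕ) :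
    HasSum (fun k : ℕ ↦ (-h) ^ k * coeff n (invOneSubRpow (1 + k * α)))
      (coeff n (discreteMLSeries α h)) := by
  set F : ℕ → PowerSeries ℝ := fun k ↦ C ((-h) ^ k) * invOneSubRpow (1 + k * α) with hF
  have hsummable : Summable F := by
    simpa only [hF, summable_iff_summable_coeff, coeff_C_mul] using
      summable_pow_mul_coeff_invOneSubRpow α (by rwa [abs_neg])
  have hshift (k : ℕ) : F (k + 1) = C (-h) * invOneSubRpow α * F k := by
    simp only [hF]
    rw [show 1 + ((k + 1 : ℕ) : ℝ) * α = α + (1 + k * α) by push_cast; ring, invOneSubRpow_add,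
      pow_succ', map_mul]
    ring
  have hfixed : ∑' k, F k = invOneSubRpow 1 + C (-h) * invOneSubRpow α * ∑' k, F k := by
    conv_lhs => rw [hsummable.tsum_eq_zero_add]
    simp only [hshift, hsummable.tsum_mul_left]
    simp [hF]
  have htsum : ∑' k, F k = discreteMLSeries α h := by
    have hconst : constantCoeff (C h + invOneSubRpow (-α)) ≠ 0 := by
      rw [constantCoeff_C_add_invOneSubRpow]
      linarith [(abs_lt.1 hh).1]
    have hcancel : invOneSubRpow α * invOneSubRpow (-α) = 1 := by
      rw [← invOneSubRpow_add, add_neg_cancel, invOneSubRpow_zero]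
    rw [discreteMLSeries, PowerSeries.eq_mul_inv_iff_mul_eq hconst, sub_eq_add_neg 1 α,
      invOneSubRpow_add]
    rw [map_neg] at hfixed
    linear_combination invOneSubRpow (-α) * hfixed - C h * (∑' k, F k) * hcancel
  rw [← htsum]
  simpa only [hF, coeff_C_mul] using (hasSum_iff_hasSum_coeff ℝ).1 hsummable.hasSum n

end InvOneSubRpow

section InvGammaSeq

/-- Euler's approximation `n ^ (-y) * ∏_{1 ≤ j ≤ n} (1 + y / j)` to `1 / Γ (y + 1)`, written with
the coefficient of `X ^ n` in `(1 - X) ^ (-(1 + y))`; compare `Real.GammaSeq`. -/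
noncomputable def invGammaSeq (y : ℝ) (n : ℕ) : ℝ :=
  PowerSeries.coeff n (invOneSubRpow (1 + y)) / n ^ y

theorem invGammaSeq_nonneg {y : ℝ} (hy : -1 ≤ y) (n : ℕ) : 0 ≤ invGammaSeq y n :=
  div_nonneg (coeff_invOneSubRpow_nonneg (by linarith) n) (by positivity)

theorem invGammaSeq_eq_div_GammaSeq {y : ℝ} (hy : -1 < y) {n : ℕ} (hn : n ≠ 0) :
    invGammaSeq y n = n / (n + (1 + y)) / Real.GammaSeq (1 + y) n := by
  have hn₀ : (0 : ℝ) < n := by positivity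
  have hprod : 0 < ∏ j ∈ Finset.range n, (1 + y + j) :=
    Finset.prod_pos fun j _ ↦ by linarith [(j.cast_nonneg : (0 : ℝ) ≤ j)]
  have hlast : 0 < n + (1 + y) := by linarith
  rw [invGammaSeq, coeff_invOneSubRpow, Real.GammaSeq, Finset.prod_range_succ,
    add_comm (1 + y) (n : ℝ), Real.rpow_add hn₀, Real.rpow_one]
  field_simp

theorem tendsto_invGammaSeq {y : ℝ} (hy : -1 < y) :
    Tendsto (invGammaSeq y) atTop (𝓝 (1 / Real.Gamma (y + 1))) := by
  have hΓ : Real.Gamma (1 + y) ≠ 0 := (Real.Gamma_pos_of_pos (by linarith)).ne'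
  rw [add_comm y]
  refine ((tendsto_natCast_div_add_atTop (1 + y)).div
    (Real.GammaSeq_tendsto_Gamma (1 + y)) hΓ).congr' ?_
  filter_upwards [eventually_ne_atTop 0] with n hn
  exact (invGammaSeq_eq_div_GammaSeq hy hn).symm

theorem one_add_mul_one_sub_inv_le_rpow {x y : ℝ} (hx : 0 < x) (hy : 0 ≤ y) :
    1 + y * (1 - x⁻¹) ≤ x ^ y := calc
  1 + y * (1 - x⁻¹) ≤ Real.log x * y + 1 := by
    linarith [mul_le_mul_of_nonneg_left (Real.one_sub_inv_le_log_of_pos hx) hy]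
  _ ≤ Real.exp (Real.log x * y) := Real.add_one_le_exp _
  _ = x ^ y := (Real.rpow_def_of_pos hx y).symm

theorem antitoneOn_invGammaSeq {y : ℝ} (hy : 0 ≤ y) : AntitoneOn (invGammaSeq y) {n | 1 ≤ n} := by
  refine antitoneOn_nat_Ici_of_succ_le fun n hn ↦ ?_
  have hn₀ : (0 : ℝ) < n := by exact_mod_cast hn
  have hcoeff := coeff_invOneSubRpow_nonneg (show 0 ≤ 1 + y by positivity) n
  have hratio : (1 + y + n) / (n + 1) ≤ ((n + 1 : ℕ) : ℝ) ^ y / n ^ y := by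
    rw [← Real.div_rpow (by positivity) hn₀.le]
    refine le_of_eq_of_le ?_ (one_add_mul_one_sub_inv_le_rpow (by positivity) hy)
    push_cast
    field_simp
    ring
  rw [invGammaSeq, invGammaSeq, coeff_succ_invOneSubRpow, div_le_iff₀ (by positivity),
    div_mul_eq_mul_div, mul_div_assoc]
  exact mul_le_mul_of_nonneg_left hratio hcoeff

theorem inv_Gamma_le_invGammaSeq {y : ℝ} (hy : 0 ≤ y) {n : ℕ} (hn : 1 ≤ n) :
    1 / Real.Gamma (y + 1) ≤ invGammaSeq y n := by
  refine le_of_tendsto (tendsto_invGammaSeq (by linarith)) ?_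
  filter_upwards [eventually_ge_atTop n] with m hm
  exact antitoneOn_invGammaSeq hy hn (hn.trans hm) hm

theorem pow_mul_invGammaSeq_natCast_mul (x α : ℝ) (n k : ℕ) :
    x ^ k * invGammaSeq (k * α) n =
      (x / n ^ α) ^ k * PowerSeries.coeff n (invOneSubRpow (1 + k * α)) := by
  rw [invGammaSeq, mul_comm (k : ℝ) α, Real.rpow_mul_natCast n.cast_nonneg, div_pow]
  ring

theorem summable_pow_mul_invGammaSeq {α x : ℝ} {n : ℕ} (hx : |x / n ^ α| < 1) :
    Summable fun k : ℕ ↦ x ^ k * invGammaSeq (k * α) n := by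
  simpa only [pow_mul_invGammaSeq_natCast_mul] using summable_pow_mul_coeff_invOneSubRpow α hx n

theorem eventually_abs_div_rpow_lt_one {α : ℝ} (hα : 0 < α) (x : ℝ) :
    ∀ᶠ n : ℕ in atTop, |x / n ^ α| < 1 := by
  have hlim : Tendsto (fun n : ℕ ↦ |x / (n : ℝ) ^ α|) atTop (𝓝 |0|) :=
    (((tendsto_rpow_atTop hα).comp tendsto_natCast_atTop_atTop).const_div_atTop x).abs
  exact hlim.eventually_lt_const (by simp)

theorem exists_summable_abs_pow_mul_invGammaSeq {α : ℝ} (hα : 0 < α) (x : ℝ) :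
    ∃ N : ℕ, 1 ≤ N ∧ Summable fun k : ℕ ↦ |x| ^ k * invGammaSeq (k * α) N := by
  obtain ⟨N, hN, hN₁⟩ :=
    ((eventually_abs_div_rpow_lt_one hα |x|).and (eventually_ge_atTop 1)).exists
  exact ⟨N, hN₁, summable_pow_mul_invGammaSeq hN⟩

end InvGammaSeq

section MittagLeffler

variable {α : ℝ}

theorem summable_inv_Gamma_mul_pow (hα : 0 < α) {r : ℝ} (hr : 0 ≤ r) :
    Summable fun k : ℕ ↦ 1 / Real.Gamma (k * α + 1) * r ^ k := by
  obtain ⟨N, hN, hsummable⟩ := exists_summable_abs_pow_mul_invGammaSeq hα r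
  rw [abs_of_nonneg hr] at hsummable
  refine .of_nonneg_of_le (fun k ↦ ?_) (fun k ↦ ?_) hsummable
  · have := Real.Gamma_pos_of_pos (s := k * α + 1) (by positivity)
    positivity
  · rw [mul_comm]
    gcongr
    exact inv_Gamma_le_invGammaSeq (by positivity) hN

theorem differentiable_tsum_mul_pow {𝕜 : Type*} [NontriviallyNormedField 𝕜] [CompleteSpace 𝕜]
    {c : ℕ → 𝕜} (hc : ∀ r : NNReal, Summable fun n ↦ ‖c n‖ * (r : ℝ) ^ n) :
    Differentiable 𝕜 fun z ↦ ∑' n, c n * z ^ n := by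
  have hradius : (FormalMultilinearSeries.ofScalars 𝕜 c).radius = ⊤ :=
    FormalMultilinearSeries.radius_eq_top_of_summable_norm _ fun r ↦ by
      simpa only [FormalMultilinearSeries.ofScalars_norm] using hc r
  have hseries := (FormalMultilinearSeries.ofScalars 𝕜 c).hasFPowerSeriesOnBall (by simp [hradius])
  have hsum : (FormalMultilinearSeries.ofScalars 𝕜 c).sum = fun z ↦ ∑' n, c n * z ^ n :=
    funext (FormalMultilinearSeries.ofScalars_sum_eq c)
  rw [hsum, hradius] at hseries
  exact fun z ↦ (hseries.analyticAt_of_mem (by simp)).differentiableAt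

theorem differentiable_mlE (hα : 0 < α) : Differentiable ℝ (mlE α) := by
  have hseries : mlE α = fun z ↦ ∑' k : ℕ, 1 / Real.Gamma (k * α + 1) * z ^ k :=
    funext fun z ↦ tsum_congr fun k ↦ by ring
  rw [hseries]
  refine differentiable_tsum_mul_pow fun r ↦
    (summable_inv_Gamma_mul_pow hα r.coe_nonneg).congr fun k ↦ ?_
  rw [Real.norm_of_nonneg (one_div_pos.2 (Real.Gamma_pos_of_pos (by positivity))).le]

theorem tendsto_coeff_discreteMLSeries (hα : 0 < α) (x : ℝ) :
    Tendsto (fun n : ℕ ↦ PowerSeries.coeff n (discreteMLSeries α (x / n ^ α))) atTop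
      (𝓝 (mlE α (-x))) := by
  obtain ⟨N, hN, hsummable⟩ := exists_summable_abs_pow_mul_invGammaSeq hα x
  have hnonneg (k : ℕ) : 0 ≤ k * α := by positivity
  have hlim : Tendsto (fun n : ℕ ↦ ∑' k : ℕ, (-x) ^ k * invGammaSeq (k * α) n) atTop
      (𝓝 (∑' k : ℕ, (-x) ^ k * (1 / Real.Gamma (k * α + 1)))) := by
    refine tendsto_tsum_of_dominated_convergence hsummable
      (fun k ↦ (tendsto_invGammaSeq (by linarith [hnonneg k])).const_mul _) ?_
    filter_upwards [eventually_ge_atTop N] with n hn k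
    rw [norm_mul, norm_pow, norm_neg, Real.norm_eq_abs,
      Real.norm_of_nonneg (invGammaSeq_nonneg (by linarith [hnonneg k]) n)]
    gcongr
    exact antitoneOn_invGammaSeq (hnonneg k) hN (hN.trans hn) hn
  simp only [mul_one_div] at hlim
  refine hlim.congr' ?_
  filter_upwards [eventually_abs_div_rpow_lt_one hα x] with n hn
  simpa only [pow_mul_invGammaSeq_natCast_mul, neg_div] using
    (hasSum_coeff_discreteMLSeries α hn n).tsum_eq

theorem mlE_nonneg_of_nonpos (hα₀ : 0 < α) (hα₁ : α ≤ 1) {z : ℝ} (hz : z ≤ 0) : 0 ≤ mlE α z := by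
  rw [← neg_neg z]
  exact ge_of_tendsto' (tendsto_coeff_discreteMLSeries hα₀ (-z)) fun n ↦
    coeff_discreteMLSeries_nonneg hα₀.le hα₁ (div_nonneg (neg_nonneg.2 hz) (by positivity)) n

theorem monotoneOn_mlE (hα₀ : 0 < α) (hα₁ : α ≤ 1) : MonotoneOn (mlE α) (Iic 0) := by
  intro z (hz : z ≤ 0) w (hw : w ≤ 0) hzw
  rw [← neg_neg z, ← neg_neg w]
  refine le_of_tendsto_of_tendsto' (tendsto_coeff_discreteMLSeries hα₀ (-z))
    (tendsto_coeff_discreteMLSeries hα₀ (-w)) fun n ↦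
      antitoneOn_coeff_discreteMLSeries hα₀.le hα₁ n ?_ ?_ (by gcongr)
  · exact div_nonneg (neg_nonneg.2 hw) (by positivity)
  · exact div_nonneg (neg_nonneg.2 hz) (by positivity)

end MittagLeffler

section Kernel

/-- The Mittag-Leffler memory kernel with rate `c` and endpoint `τ`, which is the kernel of `abcD`
for `c = α / (1 - α)`; it is meant for `σ ≤ τ`. -/
noncomputable def mlKernel (α c τ σ : ℝ) : ℝ := mlE α (-c * (τ - σ) ^ α)

variable {α c : ℝ} (τ : ℝ)

theorem mlKernel_nonneg (hα₀ : 0 < α) (hα₁ : α ≤ 1) (hc : 0 ≤ c) {σ : ℝ} (hσ : σ ≤ τ) :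
    0 ≤ mlKernel α c τ σ :=
  mlE_nonneg_of_nonpos hα₀ hα₁ (mul_nonpos_of_nonpos_of_nonneg (neg_nonpos.2 hc)
    (Real.rpow_nonneg (sub_nonneg.2 hσ) α))

theorem monotoneOn_mlKernel (hα₀ : 0 < α) (hα₁ : α ≤ 1) (hc : 0 ≤ c) :
    MonotoneOn (mlKernel α c τ) (Iic τ) := by
  have harg : MonotoneOn (fun σ ↦ -c * (τ - σ) ^ α) (Iic τ) := by
    intro σ _ σ' (hσ' : σ' ≤ τ) hle
    have hpow : (τ - σ') ^ α ≤ (τ - σ) ^ α :=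
      Real.rpow_le_rpow (sub_nonneg.2 hσ') (by linarith) hα₀.le
    exact mul_le_mul_of_nonpos_left hpow (neg_nonpos.2 hc)
  exact (monotoneOn_mlE hα₀ hα₁).comp harg fun σ hσ ↦
    mul_nonpos_of_nonpos_of_nonneg (neg_nonpos.2 hc) (Real.rpow_nonneg (sub_nonneg.2 hσ) α)

theorem continuous_mlKernel (hα : 0 < α) : Continuous (mlKernel α c τ) :=
  (differentiable_mlE hα).continuous.comp <| continuous_const.mul <|
    (continuous_const.sub continuous_id).rpow_const fun _ ↦ .inr hα.le

theorem differentiableOn_mlKernel (hα : 0 < α) : DifferentiableOn ℝ (mlKernel α c τ) (Iio τ) := by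
  refine (differentiable_mlE hα).comp_differentiableOn (DifferentiableOn.const_mul ?_ (-c))
  exact (differentiableOn_id.const_sub τ).rpow_const fun σ hσ ↦ .inl (sub_pos.2 hσ).ne'

end Kernel

theorem integral_mul_deriv_nonpos_of_monotoneOn {a b : ℝ} {k f f' : ℝ → ℝ} (hab : a ≤ b)
    (hka : 0 ≤ k a) (hk : MonotoneOn k (Icc a b)) (hkc : ContinuousOn k (Icc a b))
    (hkd : DifferentiableOn ℝ k (Ioo a b)) (hfc : ContinuousOn f (Icc a b))
    (hf : ∀ x ∈ Ioo a b, HasDerivAt f (f' x) x) (hmin : ∀ x ∈ Icc a b, f b ≤ f x)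
    (hint : IntervalIntegrable (fun x ↦ k x * f' x) MeasureTheory.volume a b) :
    ∫ x in a..b, k x * f' x ≤ 0 := by
  have hderiv (x : ℝ) (hx : x ∈ Ioo a b) : HasDerivAt (fun y ↦ k y * (f y - f b))
      (deriv k x * (f x - f b) + k x * f' x) x :=
    (hkd.differentiableAt (Ioo_mem_nhds hx.1 hx.2)).hasDerivAt.mul ((hf x hx).sub_const (f b))
  have hk' (x : ℝ) (hx : x ∈ Ioo a b) : 0 ≤ deriv k x := by
    rw [← derivWithin_of_mem_nhds (Icc_mem_nhds hx.1 hx.2)]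
    exact hk.derivWithin_nonneg
  have hle (x : ℝ) (hx : x ∈ Ioo a b) : k x * f' x ≤ deriv k x * (f x - f b) + k x * f' x :=
    le_add_of_nonneg_left (mul_nonneg (hk' x hx) (sub_nonneg.2 (hmin x (Ioo_subset_Icc_self hx))))
  calc
    ∫ x in a..b, k x * f' x ≤ k b * (f b - f b) - k a * (f a - f b) :=
      intervalIntegral.integral_le_sub_of_hasDeriv_right_of_le hab
        (hkc.mul (hfc.sub continuousOn_const)) (fun x hx ↦ (hderiv x hx).hasDerivWithinAt)
        ((intervalIntegrable_iff_integrableOn_Icc_of_le hab).1 hint) hle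
    _ = -(k a * (f a - f b)) := by ring
    _ ≤ 0 := neg_nonpos.2 (mul_nonneg hka (sub_nonneg.2 (hmin a (left_mem_Icc.2 hab))))

theorem abc_deriv_nonpos_at_min_general {α B τ₀ : ℝ} (hα₀ : 0 < α) (hα₁ : α < 1) (hB : 0 ≤ B)
    (hτ₀ : 0 ≤ τ₀) {f : ℝ → ℝ} (hfc : ContinuousOn f (Icc 0 τ₀))
    (hfd : ∀ τ ∈ Ioo 0 τ₀, DifferentiableAt ℝ f τ) (hmin : ∀ τ ∈ Icc 0 τ₀, f τ₀ ≤ f τ) :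
    abcD α B f τ₀ ≤ 0 := by
  have hc : 0 ≤ α / (1 - α) := div_nonneg hα₀.le (sub_nonneg.2 hα₁.le)
  refine mul_nonpos_of_nonneg_of_nonpos (div_nonneg hB (sub_nonneg.2 hα₁.le)) ?_
  change ∫ σ in 0..τ₀, mlKernel α (α / (1 - α)) τ₀ σ * deriv f σ ≤ 0
  by_cases hint : IntervalIntegrable (fun σ ↦ mlKernel α (α / (1 - α)) τ₀ σ * deriv f σ)
      MeasureTheory.volume 0 τ₀
  · exact integral_mul_deriv_nonpos_of_monotoneOn hτ₀ (mlKernel_nonneg τ₀ hα₀ hα₁.le hc hτ₀)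
      ((monotoneOn_mlKernel τ₀ hα₀ hα₁.le hc).mono Icc_subset_Iic_self)
      (continuous_mlKernel τ₀ hα₀).continuousOn
      ((differentiableOn_mlKernel τ₀ hα₀).mono Ioo_subset_Iio_self) hfc
      (fun τ hτ ↦ (hfd τ hτ).hasDerivAt) hmin hint
  · -- The derivative of a differentiable function need not be Lebesgue integrable; the integral is
    -- then `0` by convention.
    exact (intervalIntegral.integral_undef hint).le

theorem abc_deriv_nonpos_at_min
    (T α B : ℝ) (hT : 0 < T) (hα : 0 < α) (hα1 : α < 1) (hB : 0 < B)
    (f : ℝ → ℝ)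
    (hfdiff : ∀ τ ∈ Set.Icc (0:ℝ) T, DifferentiableAt ℝ f τ)
    (hcont : ContinuousOn (abcD α B f) (Set.Icc (0:ℝ) T))
    (τ₀ : ℝ) (hτ₀ : τ₀ ∈ Set.Icc (0:ℝ) T)
    (hmin : ∀ τ ∈ Set.Icc (0:ℝ) T, f τ₀ ≤ f τ) :
    abcD α B f τ₀ ≤ 0 := by
  have hsub : Icc 0 τ₀ ⊆ Icc 0 T := Icc_subset_Icc_right hτ₀.2
  exact abc_deriv_nonpos_at_min_general hα hα1 hB.le hτ₀.1
    (fun τ hτ ↦ (hfdiff τ (hsub hτ)).continuousAt.continuousWithinAt)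
    (fun τ hτ ↦ hfdiff τ (hsub (Ioo_subset_Icc_self hτ))) fun τ hτ ↦ hmin τ (hsub hτ)
end

section
/- For every 0 < α < 1 and every x ≥ 0, the value of the one-parameter Mittag-Leffler function at −x is strictly positive: E_α(−x) > 0. -/
/-!
The function `u t = E_α(-t ^ α)` satisfies the fractional relaxation equation `D^α u = -u` with
`u 0 = 1`, where `D^α` is the Caputo derivative of order `α`. Integrating its definition by parts
gives `Γ(1 - α) D^α u t = (u t - u 0) t ^ (-α) + α ∫₀ᵗ (u t - u s) (t - s) ^ (-α - 1) ds`, which is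
negative as soon as `u t < u 0` and `u t ≤ u s` for all `s < t`. So if `u` were ever nonpositive,
then at the first time `t` with `u t ≤ 0` one would have `D^α u t < 0 ≤ -u t`.
-/

open MeasureTheory Set Filter Topology

/-- The Caputo fractional derivative of order `α ∈ (0, 1)` with base point `0`, at the time `t`.
It is written in Marchaud's form, which does not involve the derivative of `f` and shows the sign
at a minimum of `f`. -/
noncomputable def caputoDeriv (α : ℝ) (f : ℝ → ℝ) (t : ℝ) : ℝ :=
  ((f t - f 0) * t ^ (-α) + α * ∫ s in 0..t, (f t - f s) * (t - s) ^ (-α - 1)) /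
    Real.Gamma (1 - α)

section MaximumPrinciple

lemma exists_le_forall_Ico_lt {X Y : Type*} [ConditionallyCompleteLinearOrder X]
    [TopologicalSpace X] [OrderTopology X] [LinearOrder Y] [TopologicalSpace Y]
    [ClosedIicTopology Y] {f : X → Y} {a b : X} {c : Y} (hab : a ≤ b)
    (hf : ContinuousOn f (Icc a b)) (hb : f b ≤ c) :
    ∃ t ∈ Icc a b, f t ≤ c ∧ ∀ s ∈ Ico a t, c < f s := by
  have hclosed : IsClosed (Icc a b ∩ f ⁻¹' Iic c) :=
    hf.preimage_isClosed_of_isClosed isClosed_Icc isClosed_Iic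
  obtain ⟨t, ⟨ht, hft⟩, hleast⟩ :=
    (isCompact_Icc.of_isClosed_subset hclosed inter_subset_left).exists_isLeast
      ⟨b, right_mem_Icc.2 hab, hb⟩
  refine ⟨t, ht, hft, fun s hs => lt_of_not_ge fun hfs => hs.2.not_ge ?_⟩
  exact hleast ⟨⟨hs.1, hs.2.le.trans ht.2⟩, hfs⟩

variable {α t : ℝ} {f : ℝ → ℝ}

lemma caputoDeriv_neg_of_forall_le (hα : 0 ≤ α) (hα1 : α < 1) (ht : 0 < t) (h0 : f t < f 0)
    (hf : ∀ s ∈ Ioo 0 t, f t ≤ f s) : caputoDeriv α f t < 0 := by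
  have hintegral : ∫ s in 0..t, (f t - f s) * (t - s) ^ (-α - 1) ≤ 0 := by
    rw [intervalIntegral.integral_of_le ht.le, integral_Ioc_eq_integral_Ioo]
    refine setIntegral_nonpos measurableSet_Ioo fun s hs => ?_
    exact mul_nonpos_of_nonpos_of_nonneg (sub_nonpos.2 (hf s hs))
      (Real.rpow_nonneg (sub_nonneg.2 hs.2.le) _)
  have hboundary : (f t - f 0) * t ^ (-α) < 0 :=
    mul_neg_of_neg_of_pos (sub_neg.2 h0) (Real.rpow_pos_of_pos ht _)
  exact div_neg_of_neg_of_pos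
    (add_neg_of_neg_of_nonpos hboundary (mul_nonpos_of_nonneg_of_nonpos hα hintegral))
    (Real.Gamma_pos_of_pos (sub_pos.2 hα1))

theorem pos_of_caputoDeriv_nonneg_of_nonpos (hα : 0 ≤ α) (hα1 : α < 1) (ht : 0 ≤ t)
    (hf : ContinuousOn f (Icc 0 t)) (h0 : 0 < f 0)
    (hD : ∀ s ∈ Ioc 0 t, f s ≤ 0 → 0 ≤ caputoDeriv α f s) : 0 < f t := by
  by_contra! hft
  obtain ⟨r, hr, hfr, hlt⟩ := exists_le_forall_Ico_lt ht hf hft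
  have hr0 : 0 < r := hr.1.lt_of_ne (by rintro rfl; exact hfr.not_gt h0)
  have hneg : caputoDeriv α f r < 0 := caputoDeriv_neg_of_forall_le hα hα1 hr0 (hfr.trans_lt h0)
    fun s hs => hfr.trans (hlt s ⟨hs.1.le, hs.2⟩).le
  exact hneg.not_ge (hD r ⟨hr0, hr.2⟩ hfr)

end MaximumPrinciple

section Series

lemma hasSum_mul_intervalIntegral_of_nonneg {ι : Type*} [Countable ι] {a b : ℝ} {c : ι → ℝ}
    {k : ι → ℝ → ℝ} {F : ℝ → ℝ} (hab : a ≤ b) (hint : ∀ i, IntervalIntegrable (k i) volume a b)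
    (hk : ∀ i, ∀ s ∈ Ioc a b, 0 ≤ k i s) (hsum : Summable fun i => c i * ∫ s in a..b, k i s)
    (hF : ∀ s ∈ Ioc a b, HasSum (fun i => c i * k i s) (F s)) :
    HasSum (fun i => c i * ∫ s in a..b, k i s) (∫ s in a..b, F s) := by
  simp only [intervalIntegral.integral_of_le hab] at hsum ⊢
  have hnorm (i : ι) : ∫ s in Ioc a b, ‖c i * k i s‖ = |c i * ∫ s in Ioc a b, k i s| := by
    rw [abs_mul, abs_of_nonneg (setIntegral_nonneg measurableSet_Ioc (hk i)), ← integral_const_mul]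
    refine setIntegral_congr_fun measurableSet_Ioc fun s hs => ?_
    simp only [norm_mul, Real.norm_eq_abs, abs_of_nonneg (hk i s hs)]
  have hswap := hasSum_integral_of_summable_integral_norm
    (fun i => (hint i).1.const_mul (c i)) (by simpa only [hnorm] using hsum.abs)
  rw [setIntegral_congr_fun measurableSet_Ioc fun s hs => (hF s hs).tsum_eq] at hswap
  simpa only [integral_const_mul] using hswap

variable {α t : ℝ}

lemma marchaud_integrand_nonneg {g : ℝ → ℝ} (hg : MonotoneOn g (Icc 0 t)) {s : ℝ}
    (hs : s ∈ Icc 0 t) : 0 ≤ (g t - g s) * (t - s) ^ (-α - 1) :=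
  mul_nonneg (sub_nonneg.2 (hg hs (right_mem_Icc.2 (hs.1.trans hs.2)) hs.2))
    (Real.rpow_nonneg (sub_nonneg.2 hs.2) _)

lemma integral_le_mul_caputoDeriv {g : ℝ → ℝ} (hα : 0 < α) (hα1 : α < 1) (ht : 0 ≤ t)
    (hg : g 0 ≤ g t) :
    ∫ s in 0..t, (g t - g s) * (t - s) ^ (-α - 1) ≤
      Real.Gamma (1 - α) / α * caputoDeriv α g t := by
  have hΓ : 0 < Real.Gamma (1 - α) := Real.Gamma_pos_of_pos (sub_pos.2 hα1)
  rw [div_mul_eq_mul_div, le_div_iff₀' hα, caputoDeriv, mul_div_cancel₀ _ hΓ.ne']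
  exact le_add_of_nonneg_left (mul_nonneg (sub_nonneg.2 hg) (Real.rpow_nonneg ht _))

theorem hasSum_caputoDeriv {ι : Type*} [Countable ι] {c : ι → ℝ} {g : ι → ℝ → ℝ} {f : ℝ → ℝ}
    (hα : 0 < α) (hα1 : α < 1) (ht : 0 ≤ t) (hg : ∀ i, MonotoneOn (g i) (Icc 0 t))
    (hint : ∀ i, IntervalIntegrable (fun s => (g i t - g i s) * (t - s) ^ (-α - 1)) volume 0 t)
    (hf : ∀ s ∈ Icc 0 t, HasSum (fun i => c i * g i s) (f s))
    (hsum : Summable fun i => c i * caputoDeriv α (g i) t) :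
    HasSum (fun i => c i * caputoDeriv α (g i) t) (caputoDeriv α f t) := by
  have h0 : (0 : ℝ) ∈ Icc 0 t := left_mem_Icc.2 ht
  have ht' : t ∈ Icc 0 t := right_mem_Icc.2 ht
  set k : ι → ℝ → ℝ := fun i s => (g i t - g i s) * (t - s) ^ (-α - 1)
  have hk (i : ι) (s : ℝ) (hs : s ∈ Ioc 0 t) : 0 ≤ k i s :=
    marchaud_integrand_nonneg (hg i) (Ioc_subset_Icc_self hs)
  have hsum_integral : Summable fun i => c i * ∫ s in 0..t, k i s := by
    refine Summable.of_norm_bounded (hsum.norm.mul_left (Real.Gamma (1 - α) / α)) fun i => ?_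
    have hnonneg : 0 ≤ ∫ s in 0..t, k i s := by
      rw [intervalIntegral.integral_of_le ht]
      exact setIntegral_nonneg measurableSet_Ioc (hk i)
    have hle := integral_le_mul_caputoDeriv hα hα1 ht (hg i h0 ht' ht)
    rw [norm_mul, norm_mul, mul_left_comm, Real.norm_of_nonneg hnonneg]
    refine mul_le_mul_of_nonneg_left (hle.trans ?_) (norm_nonneg _)
    exact mul_le_mul_of_nonneg_left (Real.le_norm_self _)
      (div_pos (Real.Gamma_pos_of_pos (sub_pos.2 hα1)) hα).le
  have hkernel (s : ℝ) (hs : s ∈ Ioc 0 t) :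
      HasSum (fun i => c i * k i s) ((f t - f s) * (t - s) ^ (-α - 1)) := by
    simpa only [k, ← mul_sub, mul_assoc] using
      ((hf t ht').sub (hf s (Ioc_subset_Icc_self hs))).mul_right ((t - s) ^ (-α - 1))
  have hintegral := hasSum_mul_intervalIntegral_of_nonneg ht hint hk hsum_integral hkernel
  have hboundary := ((hf t ht').sub (hf 0 h0)).mul_right (t ^ (-α))
  have hterm (i : ι) : c i * caputoDeriv α (g i) t = ((c i * g i t - c i * g i 0) * t ^ (-α) +
      α * (c i * ∫ s in 0..t, k i s)) / Real.Gamma (1 - α) := by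
    rw [caputoDeriv]
    ring
  simp only [hterm]
  exact (hboundary.add (hintegral.mul_left α)).div_const (Real.Gamma (1 - α))

end Series

section Powers

variable {α β s t : ℝ}

lemma integral_rpow_mul_sub_rpow {u v : ℝ} (hu : 0 < u) (hv : 0 < v) (ht : 0 < t) :
    ∫ s in 0..t, s ^ (u - 1) * (t - s) ^ (v - 1) =
      t ^ (u + v - 1) * ProbabilityTheory.beta u v := by
  have hbeta : Complex.betaIntegral u v = (ProbabilityTheory.beta u v : ℝ) := by
    rw [Complex.betaIntegral_eq_Gamma_mul_div _ _ (by simpa) (by simpa), ProbabilityTheory.beta]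
    simp only [← Complex.ofReal_add, Complex.Gamma_ofReal, ← Complex.ofReal_mul,
      ← Complex.ofReal_div]
  have hscaled := Complex.betaIntegral_scaled u v ht
  rw [hbeta] at hscaled
  apply Complex.ofReal_injective
  rw [← intervalIntegral.integral_ofReal, Complex.ofReal_mul, Complex.ofReal_cpow ht.le]
  push_cast
  rw [← hscaled]
  refine intervalIntegral.integral_congr fun s hs => ?_
  rw [uIcc_of_le ht.le] at hs
  simp only [Complex.ofReal_cpow hs.1, Complex.ofReal_cpow (sub_nonneg.2 hs.2)]
  push_cast
  rfl

lemma intervalIntegrable_rpow_mul_sub_rpow {u v : ℝ} (hu : 0 < u) (hv : 0 < v) (ht : 0 < t) :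
    IntervalIntegrable (fun s => s ^ (u - 1) * (t - s) ^ (v - 1)) volume 0 t := by
  apply intervalIntegral.intervalIntegrable_of_integral_ne_zero
  rw [integral_rpow_mul_sub_rpow hu hv ht]
  exact mul_ne_zero (Real.rpow_pos_of_pos ht _).ne' (ProbabilityTheory.beta_pos hu hv).ne'

lemma one_sub_rpow_le (hβ : 0 ≤ β) (hs : 0 ≤ s) (hs1 : s ≤ 1) :
    1 - s ^ β ≤ max 1 β * (1 - s) := by
  rcases le_total β 1 with h | h
  · have hle : s ^ (1 : ℝ) ≤ s ^ β := Real.rpow_le_rpow_of_exponent_ge' hs hs1 hβ h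
    rw [Real.rpow_one] at hle
    rw [max_eq_left h, one_mul]
    linarith
  · have hle := one_add_mul_self_le_rpow_one_add (s := s - 1) (by linarith) h
    rw [add_sub_cancel] at hle
    rw [max_eq_right h]
    linarith

lemma rpow_sub_rpow_le (hβ : 0 ≤ β) (hs : 0 ≤ s) (hst : s ≤ t) (ht : 0 < t) :
    t ^ β - s ^ β ≤ max 1 β * t ^ (β - 1) * (t - s) :=
  calc t ^ β - s ^ β = t ^ β * (1 - (s / t) ^ β) := by
        rw [Real.div_rpow hs ht.le, mul_sub, mul_div_cancel₀ _ (Real.rpow_pos_of_pos ht β).ne',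
          mul_one]
    _ ≤ t ^ β * (max 1 β * (1 - s / t)) := by
        gcongr
        exact one_sub_rpow_le hβ (div_nonneg hs ht.le) ((div_le_one ht).2 hst)
    _ = max 1 β * t ^ (β - 1) * (t - s) := by
        rw [Real.rpow_sub_one ht.ne']
        field_simp

lemma norm_rpow_sub_rpow_mul_le (γ : ℝ) (hβ : 0 ≤ β) (hs : 0 ≤ s) (hst : s < t) :
    ‖(t ^ β - s ^ β) * (t - s) ^ γ‖ ≤ max 1 β * t ^ (β - 1) * (t - s) ^ (γ + 1) := by
  have hts : 0 < t - s := sub_pos.2 hst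
  have hnonneg : 0 ≤ t ^ β - s ^ β := sub_nonneg.2 (Real.rpow_le_rpow hs hst.le hβ)
  rw [Real.norm_of_nonneg (mul_nonneg hnonneg (Real.rpow_nonneg hts.le _)),
    Real.rpow_add_one hts.ne', ← mul_assoc, mul_right_comm]
  gcongr
  exact rpow_sub_rpow_le hβ hs hst.le (hs.trans_lt hst)

lemma intervalIntegrable_rpow_sub_rpow_mul (hα1 : α < 1) (hβ : 0 ≤ β) (ht : 0 ≤ t) :
    IntervalIntegrable (fun s => (t ^ β - s ^ β) * (t - s) ^ (-α - 1)) volume 0 t := by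
  have hdom : IntervalIntegrable (fun s => max 1 β * t ^ (β - 1) * (t - s) ^ (-α)) volume 0 t := by
    have h := (intervalIntegral.intervalIntegrable_rpow' (a := t) (b := 0)
      (neg_lt_neg hα1)).comp_sub_left t
    simpa only [sub_self, sub_zero] using h.const_mul (max 1 β * t ^ (β - 1))
  refine hdom.mono_fun' (by fun_prop) ?_
  rw [uIoc_of_le ht, ← restrict_Ioo_eq_restrict_Ioc]
  filter_upwards [ae_restrict_mem measurableSet_Ioo] with s hs
  simpa only [sub_add_cancel] using norm_rpow_sub_rpow_mul_le (-α - 1) hβ hs.1.le hs.2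

lemma hasDerivAt_rpow_sub_rpow_mul (hs : 0 < s) (hst : s < t) :
    HasDerivAt (fun s => (t ^ β - s ^ β) * (t - s) ^ (-α))
      (α * ((t ^ β - s ^ β) * (t - s) ^ (-α - 1)) - β * (s ^ (β - 1) * (t - s) ^ (-α))) s := by
  have hleft := (Real.hasDerivAt_rpow_const (p := β) (Or.inl hs.ne')).const_sub (t ^ β)
  have hright := ((hasDerivAt_id' s).const_sub t).rpow_const (p := -α)
    (Or.inl (sub_pos.2 hst).ne')
  exact (hleft.mul hright).congr_deriv (by ring)

lemma tendsto_rpow_sub_rpow_mul_nhdsLT (hα1 : α < 1) (hβ : 0 ≤ β) (ht : 0 < t) :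
    Tendsto (fun s => (t ^ β - s ^ β) * (t - s) ^ (-α)) (𝓝[<] t) (𝓝 0) := by
  have hbound : Tendsto (fun s => max 1 β * t ^ (β - 1) * (t - s) ^ (-α + 1)) (𝓝[<] t) (𝓝 0) := by
    have hcont : Continuous fun s => max 1 β * t ^ (β - 1) * (t - s) ^ (-α + 1) :=
      continuous_const.mul
        ((continuous_const.sub continuous_id).rpow_const fun _ => Or.inr (by linarith))
    refine (hcont.tendsto' t 0 ?_).mono_left nhdsWithin_le_nhds
    rw [sub_self, Real.zero_rpow (by linarith), mul_zero]
  refine squeeze_zero_norm' ?_ hbound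
  filter_upwards [Ioo_mem_nhdsLT ht] with s hs
  exact norm_rpow_sub_rpow_mul_le (-α) hβ hs.1.le hs.2

lemma tendsto_rpow_sub_rpow_mul_nhdsGT_zero (α : ℝ) (hβ : 0 < β) (ht : 0 < t) :
    Tendsto (fun s => (t ^ β - s ^ β) * (t - s) ^ (-α)) (𝓝[>] 0) (𝓝 (t ^ (β - α))) := by
  have hcont : ContinuousAt (fun s => (t ^ β - s ^ β) * (t - s) ^ (-α)) 0 :=
    (continuousAt_const.sub (Real.continuousAt_rpow_const _ _ (Or.inr hβ.le))).mul
      ((continuousAt_const.sub continuousAt_id).rpow_const (Or.inl (by simpa using ht.ne')))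
  convert hcont.tendsto.mono_left nhdsWithin_le_nhds using 2
  rw [Real.zero_rpow hβ.ne', sub_zero, sub_zero, ← Real.rpow_add ht, sub_eq_add_neg]

lemma mul_integral_rpow_sub_rpow_mul (hα1 : α < 1) (hβ : 0 < β) (ht : 0 < t) :
    α * ∫ s in 0..t, (t ^ β - s ^ β) * (t - s) ^ (-α - 1) =
      β * ProbabilityTheory.beta β (1 - α) * t ^ (β - α) - t ^ (β - α) := by
  have hα1' : 0 < 1 - α := sub_pos.2 hα1
  have hmarchaud := (intervalIntegrable_rpow_sub_rpow_mul hα1 hβ.le ht.le).const_mul α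
  have hbeta := (intervalIntegrable_rpow_mul_sub_rpow hβ hα1' ht).const_mul β
  have hbeta_eq := integral_rpow_mul_sub_rpow hβ hα1' ht
  rw [show 1 - α - 1 = -α by ring] at hbeta hbeta_eq
  have hparts := intervalIntegral.integral_eq_sub_of_hasDerivAt_of_tendsto ht
    (fun s hs => hasDerivAt_rpow_sub_rpow_mul (α := α) (β := β) hs.1 hs.2) (hmarchaud.sub hbeta)
    (tendsto_rpow_sub_rpow_mul_nhdsGT_zero α hβ ht)
    (tendsto_rpow_sub_rpow_mul_nhdsLT hα1 hβ.le ht)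
  rw [intervalIntegral.integral_sub hmarchaud hbeta, intervalIntegral.integral_const_mul,
    intervalIntegral.integral_const_mul, hbeta_eq, show β + (1 - α) - 1 = β - α by ring] at hparts
  linear_combination hparts

theorem caputoDeriv_rpow (hα1 : α < 1) (hβ : 0 < β) (ht : 0 < t) :
    caputoDeriv α (fun s => s ^ β) t =
      Real.Gamma (β + 1) / Real.Gamma (β + 1 - α) * t ^ (β - α) := by
  have hΓ : Real.Gamma (1 - α) ≠ 0 := (Real.Gamma_pos_of_pos (sub_pos.2 hα1)).ne'
  have hboundary : t ^ β * t ^ (-α) = t ^ (β - α) := by rw [← Real.rpow_add ht, sub_eq_add_neg]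
  rw [caputoDeriv, mul_integral_rpow_sub_rpow_mul hα1 hβ ht, Real.zero_rpow hβ.ne', sub_zero,
    hboundary, ProbabilityTheory.beta, Real.Gamma_add_one hβ.ne', add_sub_assoc]
  field_simp
  ring

end Powers

section MittagLeffler

variable {α : ℝ}

lemma rpow_mul_exp_neg_le_Gamma_add_one {s r : ℝ} (hs : 0 ≤ s) (hr : 0 ≤ r) :
    r ^ s * Real.exp (-r) ≤ Real.Gamma (s + 1) := by
  have hint : IntegrableOn (fun x => Real.exp (-x) * x ^ s) (Ioi 0) := by
    simpa using Real.GammaIntegral_convergent (s := s + 1) (by linarith)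
  have hsub : Ioi r ⊆ Ioi 0 := Ioi_subset_Ioi hr
  calc r ^ s * Real.exp (-r) = ∫ x in Ioi r, Real.exp (-x) * r ^ s := by
        rw [integral_mul_const, integral_exp_neg_Ioi, mul_comm]
    _ ≤ ∫ x in Ioi r, Real.exp (-x) * x ^ s := by
        refine setIntegral_mono_on ((integrableOn_exp_neg_Ioi r).mul_const _) (hint.mono_set hsub)
          measurableSet_Ioi fun x hx => ?_
        gcongr
        exact hx.le
    _ ≤ ∫ x in Ioi 0, Real.exp (-x) * x ^ s := by
        refine setIntegral_mono_set hint ?_ hsub.eventuallyLE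
        filter_upwards [ae_restrict_mem measurableSet_Ioi] with x hx
        exact mul_nonneg (Real.exp_nonneg _) (Real.rpow_nonneg hx.le _)
    _ = Real.Gamma (s + 1) := by
        rw [Real.Gamma_eq_integral (by linarith), add_sub_cancel_right]

lemma Gamma_natCast_mul_add_one_pos (hα : 0 ≤ α) (n : ℕ) : 0 < Real.Gamma (n * α + 1) :=
  Real.Gamma_pos_of_pos (by positivity)

lemma norm_pow_div_Gamma (hα : 0 ≤ α) (z : ℝ) (n : ℕ) :
    ‖z ^ n / Real.Gamma (n * α + 1)‖ = |z| ^ n / Real.Gamma (n * α + 1) := by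
  rw [norm_div, norm_pow, Real.norm_eq_abs, Real.norm_of_nonneg
    (Gamma_natCast_mul_add_one_pos hα n).le]

lemma summable_pow_div_Gamma (hα : 0 < α) (z : ℝ) :
    Summable fun n : ℕ => z ^ n / Real.Gamma (n * α + 1) := by
  -- With `r ^ α = 2 * |z| + 1`, the bound `Γ(nα + 1) ≥ r ^ (nα) e ^ (-r)` is geometric in `n`.
  set b : ℝ := 2 * |z| + 1
  have hb : 0 < b := by positivity
  have hlt : |z| / b < 1 := (div_lt_one hb).2 (by linarith [abs_nonneg z])
  set r : ℝ := b ^ α⁻¹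
  refine Summable.of_norm_bounded
    ((summable_geometric_of_lt_one (by positivity) hlt).mul_left (Real.exp r)) fun n => ?_
  have hΓ : b ^ n * Real.exp (-r) ≤ Real.Gamma (n * α + 1) := by
    have hr : r ^ (n * α) = b ^ n := by
      rw [mul_comm, Real.rpow_mul (by positivity), Real.rpow_inv_rpow hb.le hα.ne',
        Real.rpow_natCast]
    simpa only [hr] using
      rpow_mul_exp_neg_le_Gamma_add_one (s := n * α) (r := r) (by positivity) (by positivity)
  calc ‖z ^ n / Real.Gamma (n * α + 1)‖ = |z| ^ n / Real.Gamma (n * α + 1) :=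
        norm_pow_div_Gamma hα.le z n
    _ ≤ |z| ^ n / (b ^ n * Real.exp (-r)) := by gcongr
    _ = Real.exp r * (|z| / b) ^ n := by rw [Real.exp_neg, div_pow]; field_simp

lemma hasSum_mlE (hα : 0 < α) (z : ℝ) :
    HasSum (fun n : ℕ => z ^ n / Real.Gamma (n * α + 1)) (mlE α z) :=
  (summable_pow_div_Gamma hα z).hasSum

lemma mlE_zero (α : ℝ) : mlE α 0 = 1 := by
  rw [mlE, tsum_eq_single 0 fun n hn => by rw [zero_pow hn, zero_div]]
  simp

lemma continuous_mlE (hα : 0 < α) : Continuous (mlE α) := by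
  refine continuous_iff_continuousAt.2 fun z => ?_
  suffices h : ContinuousOn (mlE α) (Metric.closedBall 0 (|z| + 1)) from
    h.continuousAt (Metric.closedBall_mem_nhds_of_mem (by simp))
  refine continuousOn_tsum (fun n => by fun_prop) (summable_pow_div_Gamma hα (|z| + 1))
    fun n y hy => ?_
  rw [norm_pow_div_Gamma hα.le]
  exact div_le_div_of_nonneg_right (pow_le_pow_left₀ (abs_nonneg y) (by simpa using hy) n)
    (Gamma_natCast_mul_add_one_pos hα.le n).le

theorem caputoDeriv_mlE (hα : 0 < α) (hα1 : α < 1) {t : ℝ} (ht : 0 < t) (z : ℝ) :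
    caputoDeriv α (fun s => mlE α (z * s ^ α)) t = z * mlE α (z * t ^ α) := by
  have hpow (n : ℕ) {s : ℝ} (hs : 0 ≤ s) : (s ^ α) ^ n = s ^ (n * α) := by
    rw [mul_comm, Real.rpow_mul_natCast hs]
  have hexp (n : ℕ) : 0 ≤ n * α := by positivity
  have hseries (s : ℝ) (hs : s ∈ Icc 0 t) :
      HasSum (fun n : ℕ => z ^ n / Real.Gamma (n * α + 1) * s ^ (n * α)) (mlE α (z * s ^ α)) := by
    simpa only [mul_pow, hpow _ hs.1, mul_div_right_comm] using hasSum_mlE hα (z * s ^ α)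
  have hshift (n : ℕ) : z ^ (n + 1) / Real.Gamma ((n + 1 : ℕ) * α + 1) *
      caputoDeriv α (fun s => s ^ ((n + 1 : ℕ) * α)) t =
        z * ((z * t ^ α) ^ n / Real.Gamma (n * α + 1)) := by
    have hΓ := (Gamma_natCast_mul_add_one_pos hα.le (n + 1)).ne'
    rw [caputoDeriv_rpow hα1 (by positivity) ht, mul_pow, hpow n ht.le,
      show (n + 1 : ℕ) * α - α = n * α by push_cast; ring,
      show (n + 1 : ℕ) * α + 1 - α = n * α + 1 by push_cast; ring]
    field_simp
    ring
  have hzero : caputoDeriv α (fun s => s ^ ((0 : ℕ) * α)) t = 0 := by simp [caputoDeriv]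
  have hderiv : HasSum (fun n : ℕ => z ^ n / Real.Gamma (n * α + 1) *
      caputoDeriv α (fun s => s ^ (n * α)) t) (z * mlE α (z * t ^ α)) := by
    rw [← hasSum_nat_add_iff' 1]
    simpa only [Finset.sum_range_one, hzero, mul_zero, sub_zero, hshift] using
      (hasSum_mlE hα (z * t ^ α)).mul_left z
  have htermwise := hasSum_caputoDeriv (g := fun n : ℕ => fun s => s ^ (n * α)) hα hα1 ht.le
    (fun n _ hx _ _ hxy => Real.rpow_le_rpow hx.1 hxy (hexp n))
    (fun n => intervalIntegrable_rpow_sub_rpow_mul hα1 (hexp n) ht.le) hseries hderiv.summable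
  exact htermwise.unique hderiv

end MittagLeffler

theorem mlE_neg_pos (α : ℝ) (hα : 0 < α) (hα1 : α < 1) (x : ℝ) (hx : 0 ≤ x) :
    0 < mlE α (-x) := by
  set u : ℝ → ℝ := fun t => mlE α (-1 * t ^ α)
  have hu : Continuous u :=
    (continuous_mlE hα).comp (continuous_const.mul (Real.continuous_rpow_const hα.le))
  have hu0 : 0 < u 0 := by simp [u, Real.zero_rpow hα.ne', mlE_zero]
  have hrelax (t : ℝ) (ht : 0 < t) : caputoDeriv α u t = -u t := by
    rw [caputoDeriv_mlE hα hα1 ht, neg_one_mul]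
  have hpos : 0 < u (x ^ α⁻¹) :=
    pos_of_caputoDeriv_nonneg_of_nonpos hα.le hα1 (by positivity) hu.continuousOn hu0
      fun t ht hut => by rw [hrelax t ht.1]; exact neg_nonneg.2 hut
  simpa only [u, Real.rpow_inv_rpow hx hα.ne', neg_one_mul] using hpos
end
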